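/- arXiv:1102.4022 — 2 statements merged into one kernel-verified Lean document; each statement's English description precedes it below -/
import Mathlib

section
/- Let v : ℝ → ℝ be a bounded stable solution of v'' = F'(v) with |v| ≤ 1, where F is a balanced double-well potential (stability: ∫ (φ')² + F''(v)φ² ≥ 0 for all compactly supported smooth φ). Suppose additionally v is nonconstant. Then v(y) = g(±(y − K)) for some K ∈ ℝ, where g is the heteroclinic connecting −1 to 1; in particular v is strictly monotone. -/
open Real MeasureTheory

lemma uniq_fwd (w w1 w2 : ℝ → ℝ) (h1 : ∀ y, HasDerivAt w (w1 y) y)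
    (h2 : ∀ y, HasDerivAt w1 (w2 y) y) (a b K : ℝ)
    (hK : ∀ y ∈ Set.Icc a b, |w2 y| ≤ K * |w y|) (h0 : w a = 0) (h0' : w1 a = 0) :
    ∀ y ∈ Set.Icc a b, w y = 0 := by
  intro y hy
  have := norm_le_gronwallBound_of_norm_deriv_right_le (f := fun y => (w y, w1 y))
    (f' := fun y => (w1 y, w2 y)) (δ := 0) (K := |K| + 1) (ε := 0) (a := a) (b := b)
    (fun y _ => ((h1 y).continuousAt.prodMk (h2 y).continuousAt).continuousWithinAt)
    (fun y _ => ((h1 y).prodMk (h2 y)).hasDerivWithinAt)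
    (by simp [h0, h0'])
    (by
      intro x hx
      have hk := hK x ⟨hx.1, hx.2.le⟩
      simp only [Prod.norm_def, Real.norm_eq_abs, add_zero]
      set m := max |w x| |w1 x|
      have m1 : |w x| ≤ m := le_max_left _ _
      have m2 : |w1 x| ≤ m := le_max_right _ _
      have hm : 0 ≤ m := (abs_nonneg _).trans m1
      have : K * |w x| ≤ |K| * m := mul_le_mul (le_abs_self K) m1 (abs_nonneg _) (abs_nonneg _)
      have := mul_nonneg (abs_nonneg K) hm
      apply max_le <;> nlinarith)
    y hy
  simp only [gronwallBound_ε0_δ0, Prod.norm_def, Real.norm_eq_abs] at this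
  have h3 := (le_max_left _ _).trans this
  exact abs_nonpos_iff.1 h3

lemma refl_deriv {w : ℝ → ℝ} {d x : ℝ} (h : HasDerivAt w d (-x)) :
    HasDerivAt (fun x => w (-x)) (-d) x := by
  have := h.comp x (hasDerivAt_neg x)
  rw [mul_neg_one] at this
  exact this

lemma uniq (w w1 w2 : ℝ → ℝ) (h1 : ∀ y, HasDerivAt w (w1 y) y)
    (h2 : ∀ y, HasDerivAt w1 (w2 y) y)
    (hK : ∀ a b : ℝ, ∃ K : ℝ, ∀ y ∈ Set.Icc a b, |w2 y| ≤ K * |w y|) (y0 : ℝ)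
    (h0 : w y0 = 0) (h0' : w1 y0 = 0) (y : ℝ) : w y = 0 := by
  rcases le_total y0 y with h | h
  · obtain ⟨K, hK⟩ := hK y0 y
    exact uniq_fwd w w1 w2 h1 h2 y0 y K hK h0 h0' y ⟨h, le_rfl⟩
  · obtain ⟨K, hK⟩ := hK y y0
    have := uniq_fwd (fun x => w (-x)) (fun x => - w1 (-x)) (fun x => w2 (-x))
      (fun x => refl_deriv (h1 (-x)))
      (fun x => by simpa using (refl_deriv (h2 (-x))).fun_neg) (-y0) (-y) K
      (fun x hx => hK (-x) ⟨by linarith [hx.2], by linarith [hx.1]⟩) (by simpa using h0)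
      (by simpa using h0') (-y) ⟨by linarith, le_rfl⟩
    simpa using this

lemma touch (f h h1 : ℝ → ℝ) (c : ℝ) (hd : ∀ y, HasDerivAt h (h1 y) y)
    (hd2 : ∀ y, HasDerivAt h1 (f (h y)) y) (hc : Continuous fun y => f (h y))
    (hf : DifferentiableAt ℝ f c) (hfc : f c = 0) (y0 : ℝ) (h0 : h y0 = c) (h0' : h1 y0 = 0)
    (y : ℝ) : h y = c := by
  have := uniq (fun y => h y - c) h1 (fun y => f (h y)) (fun y => (hd y).sub_const c) hd2 ?_ y0
    (by simp [h0]) h0' y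
  · linarith
  intro a b
  have hO := hf.hasDerivAt.isBigO_sub
  obtain ⟨C, hC⟩ := hO.bound
  obtain ⟨δ, hδ, hC⟩ := Metric.eventually_nhds_iff.1 hC
  obtain ⟨M, hM⟩ := (isCompact_Icc (a := a) (b := b)).exists_bound_of_continuousOn hc.continuousOn
  refine ⟨|C| + |M| / δ, fun y hy => ?_⟩
  have p1 := abs_nonneg (h y - c)
  have p2 : 0 ≤ |M| / δ := by positivity
  by_cases hyd : |h y - c| < δ
  · have := hC (y := h y) (by rwa [Real.dist_eq])
    simp only [hfc, sub_zero, Real.norm_eq_abs] at this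
    have := mul_le_mul_of_nonneg_right (le_abs_self C) p1
    nlinarith
  · push Not at hyd
    have h5 := hM y hy
    rw [Real.norm_eq_abs] at h5
    have : |M| ≤ |M| / δ * |h y - c| := by
      rw [div_mul_eq_mul_div, le_div_iff₀ hδ]
      exact mul_le_mul_of_nonneg_left hyd (abs_nonneg _)
    have := mul_nonneg (abs_nonneg C) p1
    have := le_abs_self M
    nlinarith

open Filter Topology in
lemma lim_deriv_aux (D D1 : ℝ → ℝ) (l d : ℝ) (hD : ∀ y, HasDerivAt D (D1 y) y)
    (hl : Tendsto D atTop (𝓝 l)) (hd : Tendsto D1 atTop (𝓝 d)) : d = 0 := by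
  have : ∀ s : ℝ, ∃ ξ ∈ Set.Ioo s (s+1), D1 ξ = D (s+1) - D s := by
    intro s
    obtain ⟨ξ, h, h'⟩ := exists_hasDerivAt_eq_slope D D1 (lt_add_one s)
      (fun y _ => (hD y).continuousAt.continuousWithinAt) (fun y _ => hD y)
    exact ⟨ξ, h, by simpa using h'⟩
  choose ξ hξ hξ' using this
  have h1 : Tendsto ξ atTop atTop := tendsto_atTop_mono (fun s => (hξ s).1.le) tendsto_id
  have h2 := hd.comp h1
  have h3 : Tendsto (fun s => D (s+1) - D s) atTop (𝓝 (l - l)) :=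
    (hl.comp (tendsto_atTop_add_const_right _ 1 tendsto_id)).sub hl
  have h4 : (D1 ∘ ξ) = fun s => D (s+1) - D s := funext hξ'
  rw [h4] at h2
  simpa using tendsto_nhds_unique h2 h3

open Filter Topology in
lemma lim_deriv (h h1 h2 : ℝ → ℝ) (c d : ℝ) (hd : ∀ y, HasDerivAt h (h1 y) y)
    (hd2 : ∀ y, HasDerivAt h1 (h2 y) y)
    (hl : Tendsto h atTop (𝓝 c)) (hl2 : Tendsto h2 atTop (𝓝 d)) :
    d = 0 ∧ Tendsto h1 atTop (𝓝 0) := by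
  have key : ∀ (D D1 : ℝ → ℝ), (∀ y, HasDerivAt D (D1 y) y) →
      ∃ ξ : ℝ → ℝ, Tendsto ξ atTop atTop ∧ ∀ s, D1 (ξ s) = D (s+1) - D s := by
    intro D D1 hD
    have : ∀ s : ℝ, ∃ ξ ∈ Set.Ioo s (s+1), D1 ξ = D (s+1) - D s := by
      intro s
      obtain ⟨ξ, h, h'⟩ := exists_hasDerivAt_eq_slope D D1 (lt_add_one s)
        (fun y _ => (hD y).continuousAt.continuousWithinAt) (fun y _ => hD y)
      exact ⟨ξ, h, by simpa using h'⟩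
    choose ξ hξ hξ' using this
    exact ⟨ξ, tendsto_atTop_mono (fun s => (hξ s).1.le) tendsto_id, hξ'⟩
  have hs : Tendsto (fun s : ℝ => s + 1) atTop atTop :=
    tendsto_atTop_add_const_right _ 1 tendsto_id
  -- the first difference of `h`
  have hD : ∀ y, HasDerivAt (fun s => h (s+1) - h s) (h1 (y+1) - h1 y) y := fun y =>
    ((hd (y+1)).comp_add_const y 1).sub (hd y)
  have hDl : Tendsto (fun s => h (s+1) - h s) atTop (𝓝 0) := by
    simpa using (hl.comp hs).sub hl
  obtain ⟨η, hη, hη'⟩ := key h1 h2 hd2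
  have hD1 : Tendsto (fun s => h1 (s+1) - h1 s) atTop (𝓝 d) := by
    refine (hl2.comp hη).congr hη'
  have d0 := lim_deriv_aux _ _ _ _ hD hDl hD1
  refine ⟨d0, ?_⟩
  subst d0
  -- h - (h' stuff): use k s = h (s+1) - h s - h1 s, bounded by mean value
  have : ∀ s : ℝ, ∃ ζ, s ≤ ζ ∧ |h1 s - (h (s+1) - h s)| ≤ |h2 ζ| := by
    intro s
    obtain ⟨ξ, hx, hx'⟩ := exists_hasDerivAt_eq_slope h h1 (lt_add_one s)
      (fun y _ => (hd y).continuousAt.continuousWithinAt) (fun y _ => hd y)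
    obtain ⟨ζ, hz, hz'⟩ := exists_hasDerivAt_eq_slope h1 h2 hx.1
      (fun y _ => (hd2 y).continuousAt.continuousWithinAt) (fun y _ => hd2 y)
    refine ⟨ζ, hz.1.le, ?_⟩
    have e1 : h1 ξ = h (s+1) - h s := by simpa using hx'
    have hp : 0 < ξ - s := by linarith [hx.1]
    rw [eq_div_iff hp.ne'] at hz'
    rw [← e1, abs_sub_comm, ← hz', abs_mul, abs_of_pos hp]
    nlinarith [abs_nonneg (h2 ζ), hx.2]
  choose ζ hζ hζ' using this
  have hz : Tendsto ζ atTop atTop := tendsto_atTop_mono hζ tendsto_id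
  have h3 : Tendsto (fun s => |h2 (ζ s)|) atTop (𝓝 0) := by
    simpa using (hl2.comp hz).abs
  have h4 : Tendsto (fun s => h1 s - (h (s+1) - h s)) atTop (𝓝 0) :=
    squeeze_zero_norm hζ' h3
  simpa using h4.add hDl

open Filter Topology in
/-- a trajectory converging to the equilibrium `c` and touching it is constant -/
lemma noreturn (f h h1 : ℝ → ℝ) (c : ℝ) (hd : ∀ y, HasDerivAt h (h1 y) y)
    (hd2 : ∀ y, HasDerivAt h1 (f (h y)) y) (hc : Continuous fun y => f (h y))
    (hf : DifferentiableAt ℝ f c) (hfc : f c = 0) (hl : Tendsto h atTop (𝓝 c))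
    (y0 : ℝ) (h0 : h y0 = c) (y : ℝ) : h y = c := by
  refine touch f h h1 c hd hd2 hc hf hfc y0 h0 ?_ y
  have hcf : ContinuousAt f c := hf.continuousAt
  have hh : Continuous h := continuous_iff_continuousAt.2 fun y => (hd y).continuousAt
  have hh1 : Continuous h1 := continuous_iff_continuousAt.2 fun y => (hd2 y).continuousAt
  have hl2 : Tendsto (fun y => f (h y)) atTop (𝓝 0) := by
    rw [← hfc]; exact hcf.tendsto.comp hl
  have hl1 := (lim_deriv h h1 _ c 0 hd hd2 hl hl2).2
  -- energy identity
  have hcont : ∀ s, y0 ≤ s → ContinuousOn f (h '' Set.uIcc y0 s) := by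
    intro s hs
    rw [continuousOn_iff_continuous_domRestrict]
    set K := Set.uIcc y0 s
    let q : K → h '' K := fun x => ⟨h x, Set.mem_image_of_mem h x.2⟩
    have hq : Continuous q := by
      apply Continuous.subtype_mk
      exact hh.comp continuous_subtype_val
    have hqs : Function.Surjective q := by
      rintro ⟨_, x, hx, rfl⟩; exact ⟨⟨x, hx⟩, rfl⟩
    have : CompactSpace K := isCompact_iff_compactSpace.1 isCompact_uIcc
    have hQ := IsClosedMap.isQuotientMap hq.isClosedMap hq hqs
    rw [hQ.continuous_iff]
    exact hc.comp continuous_subtype_val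
  have hen : ∀ s, y0 ≤ s → (h1 s)^2 - (h1 y0)^2 = 2 * ∫ u in c..(h s), f u := by
    intro s hs
    have e1 := intervalIntegral.integral_comp_mul_deriv'' (f := h) (f' := h1) (g := f)
      (a := y0) (b := s) hh.continuousOn (fun x _ => (hd x).hasDerivWithinAt) hh1.continuousOn
      (hcont s hs)
    have e2 := intervalIntegral.integral_eq_sub_of_hasDerivAt (f := fun s => (h1 s)^2 / 2)
      (f' := fun x => (f ∘ h) x * h1 x) (a := y0) (b := s)
      (fun x _ => by
        have := ((hd2 x).pow 2).div_const 2
        refine this.congr_deriv ?_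
        simp only [Function.comp]
        push_cast
        ring)
      ((hc.mul hh1).intervalIntegrable _ _)
    rw [h0] at e1
    linarith
  have hb : ∀ᶠ s in atTop, |∫ u in c..(h s), f u| ≤ 1 * |h s - c| := by
    have : ∀ᶠ u in 𝓝 c, |f u| < 1 := by
      have := hcf.abs.tendsto
      rw [hfc, abs_zero] at this
      exact this.eventually (gt_mem_nhds one_pos)
    obtain ⟨δ, hδ, hB⟩ := Metric.eventually_nhds_iff.1 this
    filter_upwards [hl (Metric.ball_mem_nhds c hδ)] with s hs
    have := intervalIntegral.norm_integral_le_of_norm_le_const (a := c) (b := h s) (f := f) (C := 1)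
      (fun u hu => by
        rw [Real.norm_eq_abs]
        refine (hB ?_).le
        have := (convex_ball c δ).ordConnected.uIcc_subset (Metric.mem_ball_self hδ) hs
        exact this (Set.uIoc_subset_uIcc hu))
    simpa using this
  have hI : Tendsto (fun s => ∫ u in c..(h s), f u) atTop (𝓝 0) := by
    apply squeeze_zero_norm' hb
    have := (hl.sub_const c).abs
    simpa using this
  have hA : Tendsto (fun s => (h1 s)^2 - 2 * ∫ u in c..(h s), f u) atTop (𝓝 0) := by
    simpa using (hl1.pow 2).sub (hI.const_mul 2)
  have hA' : Tendsto (fun s => (h1 s)^2 - 2 * ∫ u in c..(h s), f u) atTop (𝓝 ((h1 y0)^2)) := by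
    apply tendsto_const_nhds.congr'
    filter_upwards [eventually_ge_atTop y0] with s hs
    linarith [hen s hs]
  have := tendsto_nhds_unique hA hA'
  exact pow_eq_zero_iff (two_ne_zero) |>.1 this.symm


open Filter Topology in
lemma mollify (φ : ℝ → ℝ) (hφ : ContDiff ℝ 1 φ) (hs : HasCompactSupport φ) (R : ℝ)
    (hR : ∀ x, R < |x| → φ x = 0) (ε : ℝ) (hε : 0 < ε) :
    ∃ ψ : ℝ → ℝ, ContDiff ℝ (⊤ : ℕ∞) ψ ∧ HasCompactSupport ψ ∧ (∀ x, R + 1 < |x| → ψ x = 0) ∧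
      (∀ x, |ψ x - φ x| ≤ ε) ∧ ∀ x, |deriv ψ x - deriv φ x| ≤ ε := by
  have hc := hφ.continuous
  have hc' : Continuous (deriv φ) := hφ.continuous_deriv le_rfl
  have hs' : HasCompactSupport (deriv φ) := hs.deriv
  have u1 := hs.uniformContinuous_of_continuous hc
  have u2 := hs'.uniformContinuous_of_continuous hc'
  obtain ⟨δ1, hδ1, H1⟩ := Metric.uniformContinuous_iff.1 u1 ε hε
  obtain ⟨δ2, hδ2, H2⟩ := Metric.uniformContinuous_iff.1 u2 ε hε
  set r := min 1 (min δ1 δ2) with hr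
  have hr0 : 0 < r := by positivity
  let b : ContDiffBump (0 : ℝ) := ⟨r/2, r, by positivity, by linarith⟩
  have hbr : b.rOut = r := rfl
  set ψ := convolution (b.normed volume) φ (ContinuousLinearMap.lsmul ℝ ℝ) volume with hψ
  have hbl : LocallyIntegrable (b.normed volume) volume :=
    (b.continuous_normed).locallyIntegrable
  have hd : ∀ x, deriv ψ x =
      convolution (b.normed volume) (deriv φ) (ContinuousLinearMap.lsmul ℝ ℝ) volume x := fun x =>
    (hs.hasDerivAt_convolution_right (ContinuousLinearMap.lsmul ℝ ℝ) hbl hφ x).deriv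
  refine ⟨ψ, ?_, ?_, ?_, ?_, ?_⟩
  · exact b.hasCompactSupport_normed.contDiff_convolution_left _ b.contDiff_normed
      hc.locallyIntegrable
  · exact b.hasCompactSupport_normed.convolution _ hs
  · intro x hx
    have h0 : φ x = 0 := hR x (by linarith)
    have := b.dist_normed_convolution_le (μ := volume) (g := φ) (x₀ := x) (ε := 0)
      hc.aestronglyMeasurable (by
        intro y hy
        rw [hbr, Metric.mem_ball, Real.dist_eq] at hy
        have h1 : φ y = 0 := hR y (by
          have := abs_sub_abs_le_abs_sub x y
          rw [abs_sub_comm] at this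
          have : r ≤ 1 := min_le_left _ _
          linarith)
        simp [h0, h1])
    rw [h0] at this
    simpa using this
  · intro x
    have := b.dist_normed_convolution_le (μ := volume) (g := φ) (x₀ := x) (ε := ε)
      hc.aestronglyMeasurable (by
        intro y hy
        rw [hbr, Metric.mem_ball] at hy
        exact (H1 (hy.trans_le ((min_le_right _ _).trans (min_le_left _ _)))).le)
    rwa [Real.dist_eq] at this
  · intro x
    rw [hd]
    have := b.dist_normed_convolution_le (μ := volume) (g := deriv φ) (x₀ := x) (ε := ε)
      hc'.aestronglyMeasurable (by
        intro y hy
        rw [hbr, Metric.mem_ball] at hy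
        exact (H2 (hy.trans_le ((min_le_right _ _).trans (min_le_right _ _)))).le)
    rwa [Real.dist_eq] at this

open Filter Topology in
lemma stable_C1 (q : ℝ → ℝ) (hq : Continuous q)
    (hst : ∀ φ : ℝ → ℝ, ContDiff ℝ (⊤ : ℕ∞) φ → HasCompactSupport φ →
      0 ≤ ∫ y : ℝ, ((deriv φ y) ^ 2 + q y * (φ y) ^ 2))
    (φ : ℝ → ℝ) (hφ : ContDiff ℝ 1 φ) (hs : HasCompactSupport φ) :
    0 ≤ ∫ y : ℝ, ((deriv φ y) ^ 2 + q y * (φ y) ^ 2) := by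
  have hc := hφ.continuous
  have hc' : Continuous (deriv φ) := hφ.continuous_deriv le_rfl
  obtain ⟨R, hR⟩ : ∃ R, ∀ x, R < |x| → φ x = 0 := by
    obtain ⟨R, hR⟩ := hs.isCompact.isBounded.subset_closedBall 0
    refine ⟨R, fun x hx => ?_⟩
    by_contra h
    have := hR (subset_tsupport φ h)
    simp at this
    linarith
  obtain ⟨M1, hM1⟩ := hc.bounded_above_of_compact_support hs
  obtain ⟨M2, hM2⟩ := hc'.bounded_above_of_compact_support hs.deriv
  obtain ⟨B, hB⟩ := (isCompact_Icc (a := -(R+1)) (b := R+1)).exists_bound_of_continuousOn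
    hq.continuousOn
  have hn : ∀ n : ℕ, (0:ℝ) < 1 / ((n:ℝ) + 1) := fun n => by positivity
  choose ψ p1 p2 p3 p4 p5 using fun n : ℕ => mollify φ hφ hs R hR (1 / ((n:ℝ)+1)) (hn n)
  have hlim : Tendsto (fun n : ℕ => ∫ y : ℝ, ((deriv (ψ n) y) ^ 2 + q y * (ψ n y) ^ 2)) atTop
      (𝓝 (∫ y : ℝ, ((deriv φ y) ^ 2 + q y * (φ y) ^ 2))) := by
    refine tendsto_integral_of_dominated_convergence
      ((Set.Icc (-(R+1)) (R+1)).indicator fun _ => (M2+1)^2 + |B| * (M1+1)^2) ?_ ?_ ?_ ?_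
    · intro n
      have c1 := (p1 n).continuous
      have c2 : Continuous (deriv (ψ n)) := (p1 n).continuous_deriv (by norm_cast)
      exact ((c2.pow 2).add (hq.mul (c1.pow 2))).aestronglyMeasurable
    · rw [integrable_indicator_iff measurableSet_Icc]
      exact continuousOn_const.integrableOn_compact isCompact_Icc
    · intro n
      refine Eventually.of_forall fun x => ?_
      have hle : 1 / ((n:ℝ)+1) ≤ 1 := by
        rw [div_le_one (by positivity)]; linarith [Nat.cast_nonneg (α := ℝ) n]
      by_cases hx : x ∈ Set.Icc (-(R+1)) (R+1)
      · rw [Set.indicator_of_mem hx]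
        have a1 : |ψ n x| ≤ M1 + 1 := by
          have h1 := p4 n x
          have h2 := hM1 x
          rw [Real.norm_eq_abs] at h2
          have := abs_sub_abs_le_abs_sub (ψ n x) (φ x)
          linarith
        have a2 : |deriv (ψ n) x| ≤ M2 + 1 := by
          have h1 := p5 n x
          have h2 := hM2 x
          rw [Real.norm_eq_abs] at h2
          have := abs_sub_abs_le_abs_sub (deriv (ψ n) x) (deriv φ x)
          linarith
        have a3 : |q x| ≤ |B| := (hB x hx).trans (le_abs_self B)
        rw [Real.norm_eq_abs]
        refine (abs_add_le _ _).trans ?_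
        rw [abs_mul, abs_pow, abs_pow]
        gcongr
      · rw [Set.indicator_of_notMem hx]
        have hz : ∀ y, R + 1 < |y| → ψ n y = 0 := p3 n
        have hx' : R + 1 < |x| := by
          by_contra h
          push Not at h
          exact hx (abs_le.1 h)
        have : deriv (ψ n) x = 0 := by
          have : ψ n =ᶠ[𝓝 x] fun _ => (0:ℝ) := by
            filter_upwards [(isOpen_lt continuous_const continuous_abs).mem_nhds hx'] with y hy
            exact hz y hy
          rw [this.deriv_eq]; simp
        simp [this, hz x hx']
    · refine Eventually.of_forall fun x => ?_
      have h0 : Tendsto (fun n : ℕ => 1 / ((n:ℝ)+1)) atTop (𝓝 0) :=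
        tendsto_one_div_add_atTop_nhds_zero_nat
      have t1 : Tendsto (fun n => ψ n x) atTop (𝓝 (φ x)) := by
        rw [tendsto_iff_norm_sub_tendsto_zero]
        exact squeeze_zero (fun _ => norm_nonneg _) (fun n => p4 n x) h0
      have t2 : Tendsto (fun n => deriv (ψ n) x) atTop (𝓝 (deriv φ x)) := by
        rw [tendsto_iff_norm_sub_tendsto_zero]
        exact squeeze_zero (fun _ => norm_nonneg _) (fun n => p5 n x) h0
      exact (t2.pow 2).add ((t1.pow 2).const_mul (q x))
  exact ge_of_tendsto' hlim fun n => hst _ (p1 n) (p2 n)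

open Filter Topology in
lemma indicator_deriv (h h1 : ℝ → ℝ) (a b : ℝ) (hab : a < b)
    (hd : ∀ x ∈ Set.Icc a b, HasDerivAt h (h1 x) x)
    (ha : h a = 0) (hb : h b = 0) (ha' : h1 a = 0) (hb' : h1 b = 0) (x : ℝ) :
    HasDerivAt ((Set.Icc a b).indicator h) ((Set.Icc a b).indicator h1 x) x := by
  have endp : ∀ x ∈ Set.Icc a b, h x = 0 → h1 x = 0 →
      HasDerivAt ((Set.Icc a b).indicator h) ((Set.Icc a b).indicator h1 x) x := by
    intro x hx h0 h0'
    have h2 := hd x hx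
    rw [Set.indicator_of_mem hx, h0']
    rw [h0', hasDerivAt_iff_isLittleO] at h2
    rw [hasDerivAt_iff_isLittleO]
    simp only [Set.indicator_of_mem hx, h0, smul_zero, sub_zero] at h2 ⊢
    refine Asymptotics.IsBigO.trans_isLittleO ?_ h2
    refine Asymptotics.isBigO_of_le _ fun y => ?_
    exact norm_indicator_le_norm_self _ _
  rcases lt_trichotomy x a with h | h | h
  · rw [Set.indicator_of_notMem (by simp [h])]
    apply (hasDerivAt_const x (0:ℝ)).congr_of_eventuallyEq
    filter_upwards [Iio_mem_nhds h] with y hy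
    exact Set.indicator_of_notMem (fun hy' => absurd hy'.1 (not_le.2 hy)) _
  · subst h; exact endp x ⟨le_rfl, hab.le⟩ ha ha'
  rcases lt_trichotomy x b with h' | h' | h'
  · rw [Set.indicator_of_mem (show x ∈ Set.Icc a b from ⟨h.le, h'.le⟩)]
    apply (hd x ⟨h.le, h'.le⟩).congr_of_eventuallyEq
    filter_upwards [Icc_mem_nhds h h'] with y hy
    exact Set.indicator_of_mem hy _
  · subst h'; exact endp x ⟨hab.le, le_rfl⟩ hb hb'
  · rw [Set.indicator_of_notMem (by simp [h'])]
    apply (hasDerivAt_const x (0:ℝ)).congr_of_eventuallyEq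
    filter_upwards [Ioi_mem_nhds h'] with y hy
    exact Set.indicator_of_notMem (fun hy' => absurd hy'.2 (not_le.2 hy)) _

set_option maxHeartbeats 2000000 in
open Filter Topology in
lemma unstable (q u u1 : ℝ → ℝ) (hq : Continuous q) (hu : ∀ x, HasDerivAt u (u1 x) x)
    (hu1 : ∀ x, HasDerivAt u1 (q x * u x) x) (a b : ℝ) (hab : a < b)
    (hpos : ∀ x ∈ Set.Icc a b, 0 ≤ u x) (ha : u a = 0) (hb : u b = 0) (hneg : u1 b < u1 a)
    (hst : ∀ φ : ℝ → ℝ, ContDiff ℝ (⊤ : ℕ∞) φ → HasCompactSupport φ →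
      0 ≤ ∫ y : ℝ, ((deriv φ y) ^ 2 + q y * (φ y) ^ 2)) : False := by
  have cu : Continuous u := continuous_iff_continuousAt.2 fun y => (hu y).continuousAt
  have cu1 : Continuous u1 := continuous_iff_continuousAt.2 fun y => (hu1 y).continuousAt
  -- cut-off
  let χ : ContDiffBump ((a+b)/2) := ⟨b - a, 2 * (b-a), by linarith, by linarith⟩
  have hχ1 : ∀ x ∈ Set.Icc a b, (χ : ℝ → ℝ) =ᶠ[𝓝 x] fun _ => 1 := by
    intro x hx
    have : x ∈ Metric.ball ((a+b)/2) (b-a) := by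
      rw [Metric.mem_ball, Real.dist_eq, abs_lt]; constructor <;> linarith [hx.1, hx.2]
    filter_upwards [Metric.isOpen_ball.mem_nhds this] with y hy
    exact χ.one_of_mem_closedBall (Metric.ball_subset_closedBall hy)
  have hχd : ∀ x ∈ Set.Icc a b, deriv χ x = 0 := fun x hx => by
    rw [(hχ1 x hx).deriv_eq]; simp
  have hχ2 : ∀ x ∈ Set.Icc a b, χ x = 1 := fun x hx => (hχ1 x hx).eq_of_nhds
  have cχ : Continuous χ := χ.continuous
  have sχ : ContDiff ℝ 1 χ := χ.contDiff
  have cχ' : Continuous (deriv χ) := sχ.continuous_deriv le_rfl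
  set A := ∫ y : ℝ, ((deriv χ y) ^ 2 + q y * (χ y) ^ 2) with hA
  have iχ : Integrable (fun y : ℝ => (deriv χ y) ^ 2 + q y * (χ y) ^ 2) := by
    apply Continuous.integrable_of_hasCompactSupport
    · exact (cχ'.pow 2).add (hq.mul (cχ.pow 2))
    · apply HasCompactSupport.add
      · exact χ.hasCompactSupport.deriv.comp_left (g := fun x => x^2) (by simp)
      · exact (χ.hasCompactSupport.comp_left (g := fun x => x^2) (by simp)).mul_left
  obtain ⟨B, hB⟩ := (isCompact_Icc (a := a) (b := b)).exists_bound_of_continuousOn hq.continuousOn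
  obtain ⟨U, hU⟩ := (isCompact_Icc (a := a) (b := b)).exists_bound_of_continuousOn cu.continuousOn
  simp only [Real.norm_eq_abs] at hB hU
  have hB0 : 0 ≤ B := (abs_nonneg _).trans (hB a ⟨le_rfl, hab.le⟩)
  have hU0 : 0 ≤ U := (abs_nonneg _).trans (hU a ⟨le_rfl, hab.le⟩)
  set m := u1 a - u1 b with hm
  have hm0 : 0 < m := by linarith
  have key : ∀ t ε : ℝ, 0 < t → 0 < ε →
      0 ≤ t^2 * A - 2 * t * m + B * (ε * (U + 2 * t)) * (b - a) := by
    intro t ε ht hε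
    have hue : ∀ x ∈ Set.Icc a b, 0 < u x + ε := fun x hx => by linarith [hpos x hx]
    set G : ℝ → ℝ := fun x => u x ^ 2 / (u x + ε) with hG
    set G1 : ℝ → ℝ := fun x => (u x ^ 2 + 2 * u x * ε) / (u x + ε)^2 * u1 x with hG1
    set P : ℝ → ℝ := fun x => u x ^ 3 / (u x + ε)^2 + ε / 3 * (u x / (u x + ε))^3 with hP
    have cG : ContinuousOn G (Set.Icc a b) :=
      (cu.pow 2).continuousOn.div (cu.add continuous_const).continuousOn
        (fun x hx => (hue x hx).ne')
    have cG1 : ContinuousOn G1 (Set.Icc a b) := by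
      refine ContinuousOn.mul (ContinuousOn.div (by fun_prop) (by fun_prop) ?_) cu1.continuousOn
      exact fun x hx => (pow_pos (hue x hx) 2).ne'
    have cP : ContinuousOn P (Set.Icc a b) := by
      refine ContinuousOn.add (ContinuousOn.div (by fun_prop) (by fun_prop) ?_)
        (continuousOn_const.mul (ContinuousOn.pow (ContinuousOn.div (by fun_prop) (by fun_prop) ?_) 3))
      · exact fun x hx => (pow_pos (hue x hx) 2).ne'
      · exact fun x hx => (hue x hx).ne'
    have dG : ∀ x ∈ Set.Icc a b, HasDerivAt G (G1 x) x := by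
      intro x hx
      have hne := (hue x hx).ne'
      have := ((hu x).fun_pow 2).fun_div ((hu x).add_const ε) hne
      refine this.congr_deriv ?_
      simp only [hG1]
      field_simp
      push_cast
      ring
    have dP : ∀ x ∈ Set.Icc a b, HasDerivAt (fun x => u1 x * P x)
        (G1 x ^ 2 + q x * u x * P x) x := by
      intro x hx
      have hne := (hue x hx).ne'
      have e1 := ((hu x).fun_pow 3).fun_div (((hu x).add_const ε).fun_pow 2) (pow_ne_zero 2 hne)
      have e2 := (((hu x).fun_div ((hu x).add_const ε) hne).fun_pow 3).const_mul (ε / 3)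
      have := (hu1 x).fun_mul (e1.fun_add e2)
      refine this.congr_deriv ?_
      simp only [hG1, hP, Nat.cast_ofNat, Nat.add_one_sub_one, pow_one]
      field_simp
      ring
    have ga : G a = 0 := by simp [hG, ha]
    have gb : G b = 0 := by simp [hG, hb]
    have ga' : G1 a = 0 := by simp [hG1, ha]
    have gb' : G1 b = 0 := by simp [hG1, hb]
    set J := Set.Icc a b with hJ
    have dφ : ∀ x, HasDerivAt (fun x => J.indicator G x + t * χ x)
        (J.indicator G1 x + t * deriv χ x) x := fun x =>
      (indicator_deriv G G1 a b hab dG ga gb ga' gb' x).fun_add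
        (((sχ.differentiable (by norm_num)) x).hasDerivAt.const_mul t)
    have hfr : frontier J = {a, b} := frontier_Icc hab.le
    have hφ : ContDiff ℝ 1 (fun x => J.indicator G x + t * χ x) := by
      rw [contDiff_one_iff_deriv]
      refine ⟨fun x => (dφ x).differentiableAt, ?_⟩
      have : deriv (fun x => J.indicator G x + t * χ x) =
          fun x => J.indicator G1 x + t * deriv χ x := funext fun x => (dφ x).deriv
      rw [this]
      refine Continuous.add ?_ (continuous_const.mul cχ')
      apply continuous_indicator
      · rw [hfr]; rintro x (rfl | rfl) <;> assumption
      · rw [hJ, closure_Icc]; exact cG1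
    have hφs : HasCompactSupport (fun x => J.indicator G x + t * χ x) := by
      apply HasCompactSupport.add
      · exact HasCompactSupport.intro (K := J) isCompact_Icc
          (fun x hx => Set.indicator_of_notMem hx _)
      · exact χ.hasCompactSupport.mul_left
    have h0 := stable_C1 q hq hst _ hφ hφs
    have e : (fun y : ℝ => (deriv (fun x => J.indicator G x + t * χ x) y) ^ 2
          + q y * (J.indicator G y + t * χ y) ^ 2) =
        fun y => t^2 * ((deriv χ y) ^ 2 + q y * (χ y) ^ 2) +
          J.indicator (fun y => G1 y ^ 2 + q y * G y ^ 2 + 2 * t * (q y * G y)) y := by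
      funext y
      rw [(dφ y).deriv]
      by_cases hy : y ∈ J
      · simp only [Set.indicator_of_mem hy, hχd y hy, hχ2 y hy]; ring
      · simp only [Set.indicator_of_notMem hy]; ring
    have cI : ContinuousOn (fun y => G1 y ^ 2 + q y * G y ^ 2 + 2 * t * (q y * G y)) J :=
      ((cG1.pow 2).add (hq.continuousOn.mul (cG.pow 2))).add
        (continuousOn_const.mul (hq.continuousOn.mul cG))
    rw [e, integral_add (iχ.const_mul _) ((integrable_indicator_iff measurableSet_Icc).2
      (cI.integrableOn_compact isCompact_Icc)), integral_const_mul,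
      integral_indicator measurableSet_Icc, integral_Icc_eq_integral_Ioc,
      ← intervalIntegral.integral_of_le hab.le] at h0
    have huI : Set.uIcc a b = J := Set.uIcc_of_le hab.le
    -- evaluate
    have i1 : IntervalIntegrable (fun y => G1 y ^ 2 + q y * u y * P y) volume a b := by
      apply ContinuousOn.intervalIntegrable; rw [huI]
      exact (cG1.pow 2).add ((hq.mul cu).continuousOn.mul cP)
    have f1 : ∫ y in a..b, (G1 y ^ 2 + q y * u y * P y) = 0 := by
      rw [intervalIntegral.integral_eq_sub_of_hasDerivAt (fun x hx => dP x (huI ▸ hx)) i1]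
      simp [hP, ha, hb]
    have i2 : IntervalIntegrable (fun y => q y * u y) volume a b :=
      (hq.mul cu).intervalIntegrable _ _
    have f2 : ∫ y in a..b, (q y * u y) = u1 b - u1 a :=
      intervalIntegral.integral_eq_sub_of_hasDerivAt (fun x _ => hu1 x) i2
    have i3 : IntervalIntegrable (fun y => q y * (G y ^2 - u y * P y + 2 * t * (G y - u y)))
        volume a b := by
      apply ContinuousOn.intervalIntegrable; rw [huI]
      exact hq.continuousOn.mul (((cG.pow 2).sub (cu.continuousOn.mul cP)).add
        (continuousOn_const.mul (cG.sub cu.continuousOn)))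
    have f3 : ∫ y in a..b, (G1 y ^ 2 + q y * G y ^ 2 + 2 * t * (q y * G y)) =
        (∫ y in a..b, (G1 y ^ 2 + q y * u y * P y)) + (2 * t * ∫ y in a..b, (q y * u y)) +
        ∫ y in a..b, q y * (G y ^2 - u y * P y + 2 * t * (G y - u y)) := by
      rw [← intervalIntegral.integral_const_mul, ← intervalIntegral.integral_add i1 (i2.const_mul _),
        ← intervalIntegral.integral_add (i1.add (i2.const_mul _)) i3]
      congr 1
      funext y
      ring
    have f4 := intervalIntegral.norm_integral_le_of_norm_le_const (a := a) (b := b)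
      (f := fun y => q y * (G y ^2 - u y * P y + 2 * t * (G y - u y)))
      (C := B * (ε * (U + 2 * t))) (by
        intro y hy
        have hy : y ∈ J := by rw [← huI]; exact Set.uIoc_subset_uIcc hy
        rw [Real.norm_eq_abs, abs_mul]
        refine mul_le_mul (hB y hy) ?_ (abs_nonneg _) hB0
        have hp := hue y hy
        have h1 : G y - u y = - (ε * (u y / (u y + ε))) := by
          simp only [hG]; field_simp; ring
        have h2 : G y ^ 2 - u y * P y = - (ε / 3 * (u y / (u y + ε))^3 * u y) := by
          simp only [hG, hP]; field_simp; ring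
        have hr0 : 0 ≤ u y / (u y + ε) := div_nonneg (hpos y hy) hp.le
        have hr1 : u y / (u y + ε) ≤ 1 := (div_le_one hp).2 (by linarith)
        have hr3 : (u y / (u y + ε))^3 ≤ 1 := pow_le_one₀ hr0 hr1
        have hr30 : 0 ≤ (u y / (u y + ε))^3 := pow_nonneg hr0 3
        rw [h1, h2]
        generalize (u y / (u y + ε))^3 = s at *
        generalize u y / (u y + ε) = r at *
        have hu0 := hpos y hy
        have huU : u y ≤ U := (le_abs_self _).trans (hU y hy)
        have k1 : ε / 3 * s * u y ≤ ε * U := by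
          have : s * u y ≤ 1 * U := mul_le_mul hr3 huU hu0 zero_le_one
          have := mul_le_mul_of_nonneg_left this (by positivity : 0 ≤ ε / 3)
          have := mul_nonneg hε.le hU0
          nlinarith
        have k2 : t * (ε * r) ≤ t * ε := by
          have : ε * r ≤ ε * 1 := mul_le_mul_of_nonneg_left hr1 hε.le
          have := mul_le_mul_of_nonneg_left this ht.le
          linarith
        have k3 : 0 ≤ ε / 3 * s * u y := by positivity
        have k4 : 0 ≤ t * (ε * r) := by positivity
        rw [abs_le]; constructor <;> nlinarith)
    rw [Real.norm_eq_abs, abs_of_pos (by linarith : 0 < b - a)] at f4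
    have f5 := (le_abs_self _).trans f4
    rw [f3, f1, f2] at h0
    have hm' : u1 b - u1 a = -m := by rw [hm]; ring
    rw [hm'] at h0
    linarith
  set t := m / (|A| + 1) with ht
  have hA1 : 0 < |A| + 1 := by positivity
  have ht0 : 0 < t := by positivity
  have hta : t * (|A| + 1) = m := by rw [ht]; field_simp
  set C := B * (U + 2 * t) * (b - a) with hC
  have hC0 : 0 ≤ C := mul_nonneg (by positivity) (by linarith)
  have hk := key t (t * m / (2 * (C + 1))) ht0 (by positivity)
  have h1 : t^2 * A ≤ t * m := by
    rw [← hta]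
    have := mul_le_mul_of_nonneg_left (le_abs_self A) (by positivity : 0 ≤ t^2)
    nlinarith [mul_pos ht0 ht0]
  have h2 : B * (t * m / (2 * (C + 1)) * (U + 2 * t)) * (b - a) = t * m * (C / (2 * (C+1))) := by
    rw [hC]; ring
  have h3 : C / (2 * (C+1)) ≤ 1 / 2 := by
    rw [div_le_div_iff₀ (by positivity) (by positivity)]; linarith
  have h4 : 0 < t * m := by positivity
  rw [h2] at hk
  nlinarith

structure DWell (F f q : ℝ → ℝ) : Prop where
  Fc : ContinuousOn F (Set.Icc (-1) 1)
  Fd : ∀ t ∈ Set.Ioo (-1 : ℝ) 1, HasDerivAt F (f t) t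
  fd : ∀ t ∈ Set.Ioo (-1 : ℝ) 1, HasDerivAt f (q t) t
  fc : ∀ t ∈ Set.Icc (-1 : ℝ) 1, ContinuousAt f t
  qc : ContinuousOn q (Set.Ioo (-1) 1)
  lip : ∃ K : ℝ, ∀ s ∈ Set.Ioo (-1 : ℝ) 1, ∀ t ∈ Set.Ioo (-1 : ℝ) 1, |f s - f t| ≤ K * |s - t|
  F1 : F 1 = 0
  Fm1 : F (-1) = 0
  pos : ∀ t ∈ Set.Ioo (-1 : ℝ) 0, 0 < f t
  neg : ∀ t ∈ Set.Ioo (0 : ℝ) 1, f t < 0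

structure Sol (f h h1 : ℝ → ℝ) : Prop where
  d1 : ∀ y, HasDerivAt h (h1 y) y
  d2 : ∀ y, HasDerivAt h1 (f (h y)) y

lemma Sol.cont {f h h1 : ℝ → ℝ} (H : Sol f h h1) : Continuous h :=
  continuous_iff_continuousAt.2 fun y => (H.d1 y).continuousAt

lemma Sol.cont1 {f h h1 : ℝ → ℝ} (H : Sol f h h1) : Continuous h1 :=
  continuous_iff_continuousAt.2 fun y => (H.d2 y).continuousAt

lemma Sol.refl {f h h1 : ℝ → ℝ} (H : Sol f h h1) :
    Sol f (fun y => h (-y)) (fun y => - h1 (-y)) :=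
  ⟨fun x => refl_deriv (H.d1 (-x)), fun x => by simpa using (refl_deriv (H.d2 (-x))).fun_neg⟩

lemma DWell.sM {F f q : ℝ → ℝ} (W : DWell F f q) : StrictMonoOn F (Set.Icc (-1) 0) := by
  apply strictMonoOn_of_deriv_pos (convex_Icc _ _)
  · exact W.Fc.mono (Set.Icc_subset_Icc le_rfl zero_le_one)
  · intro x hx
    rw [interior_Icc] at hx
    rw [(W.Fd x ⟨hx.1, hx.2.trans zero_lt_one⟩).deriv]
    exact W.pos x hx

lemma DWell.sA {F f q : ℝ → ℝ} (W : DWell F f q) : StrictAntiOn F (Set.Icc 0 1) := by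
  apply strictAntiOn_of_deriv_neg (convex_Icc _ _)
  · exact W.Fc.mono (Set.Icc_subset_Icc (by norm_num) le_rfl)
  · intro x hx
    rw [interior_Icc] at hx
    rw [(W.Fd x ⟨by linarith [hx.1], hx.2⟩).deriv]
    exact W.neg x hx

lemma DWell.Fpos {F f q : ℝ → ℝ} (W : DWell F f q) {t : ℝ} (ht : t ∈ Set.Ioo (-1 : ℝ) 1) :
    0 < F t := by
  rcases le_total t 0 with h | h
  · have := W.sM (a := -1) (b := t) ⟨le_rfl, by norm_num⟩ ⟨ht.1.le, h⟩ ht.1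
    rwa [W.Fm1] at this
  · have := W.sA (a := t) (b := 1) ⟨h, ht.2.le⟩ ⟨by norm_num, le_rfl⟩ ht.2
    rwa [W.F1] at this

lemma DWell.Fmax {F f q : ℝ → ℝ} (W : DWell F f q) {t : ℝ} (ht : t ∈ Set.Ioo (-1 : ℝ) 1)
    (h0 : F t = F 0) : t = 0 := by
  rcases lt_trichotomy t 0 with h | h | h
  · have := W.sM (a := t) (b := 0) ⟨ht.1.le, h.le⟩ ⟨by norm_num, le_rfl⟩ h
    linarith
  · exact h
  · have := W.sA (a := 0) (b := t) ⟨le_rfl, by norm_num⟩ ⟨h.le, ht.2.le⟩ h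
    linarith

lemma DWell.zeros {F f q : ℝ → ℝ} (W : DWell F f q) {t : ℝ} (ht : t ∈ Set.Icc (-1 : ℝ) 1)
    (h0 : f t = 0) : t = -1 ∨ t = 0 ∨ t = 1 := by
  by_contra! h
  obtain ⟨h1, h2, h3⟩ := h
  rcases lt_or_gt_of_ne h2 with h | h
  · exact (W.pos t ⟨lt_of_le_of_ne ht.1 h1.symm, h⟩).ne' h0
  · exact (W.neg t ⟨h, lt_of_le_of_ne ht.2 h3⟩).ne h0

lemma energy {F f q h h1 : ℝ → ℝ} (W : DWell F f q) (H : Sol f h h1)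
    (hr : ∀ y, h y ∈ Set.Ioo (-1 : ℝ) 1) (x y : ℝ) :
    h1 x ^ 2 - 2 * F (h x) = h1 y ^ 2 - 2 * F (h y) := by
  have d : ∀ x, HasDerivAt (fun x => h1 x ^ 2 - 2 * F (h x)) 0 x := by
    intro x
    have := ((H.d2 x).fun_pow 2).fun_sub (((W.Fd _ (hr x)).comp x (H.d1 x)).const_mul 2)
    refine this.congr_deriv ?_
    push_cast
    ring
  exact is_const_of_deriv_eq_zero (f := fun x => h1 x ^ 2 - 2 * F (h x))
    (fun x => (d x).differentiableAt) (fun x => (d x).deriv) x y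

open Filter Topology in
lemma limTop {F f q h h1 : ℝ → ℝ} (W : DWell F f q) (H : Sol f h h1)
    (hr : ∀ y, h y ∈ Set.Ioo (-1 : ℝ) 1) (c : ℝ) (hl : Tendsto h atTop (𝓝 c)) :
    c ∈ Set.Icc (-1 : ℝ) 1 ∧ f c = 0 ∧ ∀ y, h1 y ^ 2 - 2 * F (h y) = - 2 * F c := by
  have hr' : ∀ y, h y ∈ Set.Icc (-1 : ℝ) 1 := fun y => Set.Ioo_subset_Icc_self (hr y)
  have hc : c ∈ Set.Icc (-1 : ℝ) 1 :=
    isClosed_Icc.mem_of_tendsto hl (Eventually.of_forall hr')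
  obtain ⟨h0, hl1⟩ := lim_deriv h h1 _ c (f c) H.d1 H.d2 hl ((W.fc c hc).tendsto.comp hl)
  refine ⟨hc, h0, fun y => ?_⟩
  have hF : Tendsto (fun y => F (h y)) atTop (𝓝 (F c)) :=
    (W.Fc c hc).tendsto.comp (tendsto_nhdsWithin_iff.2 ⟨hl, Eventually.of_forall hr'⟩)
  have hE := (hl1.pow 2).sub (hF.const_mul 2)
  have hE' : Tendsto (fun x => h1 x ^ 2 - 2 * F (h x)) atTop (𝓝 (h1 y ^ 2 - 2 * F (h y))) :=
    tendsto_const_nhds.congr fun x => energy W H hr y x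
  have := tendsto_nhds_unique hE hE'
  rw [← this]; ring

lemma sgn (φ : ℝ → ℝ) (hφ : Continuous φ) (s : Set ℝ) (hs : s.OrdConnected)
    (h : ∀ x ∈ s, φ x ≠ 0) : (∀ x ∈ s, 0 < φ x) ∨ (∀ x ∈ s, φ x < 0) := by
  by_contra! hcon
  obtain ⟨⟨x, hx, hx'⟩, y, hy, hy'⟩ := hcon
  have := intermediate_value_uIcc (f := φ) (a := x) (b := y) hφ.continuousOn
  obtain ⟨z, hz, hz'⟩ := this (Set.mem_uIcc.2 (Or.inl ⟨hx', hy'⟩))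
  exact h z (hs.uIcc_subset hx hy hz) hz'

open Filter Topology in
lemma right_nonneg (u : ℝ → ℝ) (d a b : ℝ) (hab : a < b) (hd : HasDerivAt u d a) (h0 : u a = 0)
    (hp : ∀ x ∈ Set.Ioo a b, 0 < u x) : 0 ≤ d := by
  have := (hasDerivWithinAt_iff_tendsto_slope' (by simp)).1 (hd.hasDerivWithinAt (s := Set.Ioi a))
  refine ge_of_tendsto this ?_
  filter_upwards [Ioo_mem_nhdsGT hab] with x hx
  rw [slope_def_field, h0, sub_zero]
  exact div_nonneg (hp x hx).le (by linarith [hx.1])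

open Filter Topology in
lemma nocrit {F f q v v1 : ℝ → ℝ} (W : DWell F f q) (H : Sol f v v1)
    (hr : ∀ y, v y ∈ Set.Ioo (-1 : ℝ) 1)
    (hst : ∀ φ : ℝ → ℝ, ContDiff ℝ (⊤ : ℕ∞) φ → HasCompactSupport φ →
      0 ≤ ∫ y : ℝ, ((deriv φ y) ^ 2 + q (v y) * (φ y) ^ 2))
    (hnc : ¬ ∃ c : ℝ, ∀ y : ℝ, v y = c) (y0 : ℝ) : v1 y0 ≠ 0 := by
  intro hy0
  have hf0 : f (v y0) ≠ 0 := by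
    intro h0
    apply hnc
    refine ⟨v y0, fun y => ?_⟩
    obtain ⟨K, hK⟩ := W.lip
    have := uniq (fun y => v y - v y0) v1 (fun y => f (v y)) (fun y => (H.d1 y).sub_const _) H.d2
      (fun a b => ⟨K, fun y _ => by simpa [h0] using hK _ (hr y) _ (hr y0)⟩) y0 (by simp) hy0 y
    linarith
  have hz : ∃ z, y0 < z ∧ v1 z = 0 := by
    by_contra! hne
    have mono : ∃ c, Tendsto v atTop (𝓝 c) ∧ c ≠ v y0 := by
      have hev : (fun s => v (max s y0)) =ᶠ[atTop] v := by
        filter_upwards [eventually_ge_atTop y0] with s hs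
        rw [max_eq_left hs]
      rcases sgn v1 H.cont1 (Set.Ioi y0) Set.ordConnected_Ioi (fun x hx => hne x hx) with h | h
      · have sm : StrictMonoOn v (Set.Ici y0) := by
          apply strictMonoOn_of_deriv_pos (convex_Ici _) H.cont.continuousOn
          intro x hx
          rw [interior_Ici] at hx
          rw [(H.d1 x).deriv]; exact h x hx
        have m : Monotone (fun s => v (max s y0)) := fun s t hst =>
          sm.monotoneOn (Set.mem_Ici.2 (le_max_right _ _)) (Set.mem_Ici.2 (le_max_right _ _)) (max_le_max_right _ hst)
        have t := tendsto_atTop_ciSup m ⟨1, by rintro _ ⟨s, rfl⟩; exact (hr _).2.le⟩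
        refine ⟨_, t.congr' hev, ?_⟩
        have h1 : v (max (y0+1) y0) ≤ ⨆ s, v (max s y0) := m.ge_of_tendsto t _
        have h2 : v y0 < v (y0+1) := sm (Set.mem_Ici.2 le_rfl) (Set.mem_Ici.2 (by linarith)) (by linarith)
        rw [max_eq_left (by linarith)] at h1
        exact (h2.trans_le h1).ne'
      · have sm : StrictAntiOn v (Set.Ici y0) := by
          apply strictAntiOn_of_deriv_neg (convex_Ici _) H.cont.continuousOn
          intro x hx
          rw [interior_Ici] at hx
          rw [(H.d1 x).deriv]; exact h x hx
        have m : Antitone (fun s => v (max s y0)) := fun s t hst =>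
          sm.antitoneOn (Set.mem_Ici.2 (le_max_right _ _)) (Set.mem_Ici.2 (le_max_right _ _)) (max_le_max_right _ hst)
        have t := tendsto_atTop_ciInf m ⟨-1, by rintro _ ⟨s, rfl⟩; exact (hr _).1.le⟩
        refine ⟨_, t.congr' hev, ?_⟩
        have h1 : ⨅ s, v (max s y0) ≤ v (max (y0+1) y0) := m.le_of_tendsto t _
        have h2 : v (y0+1) < v y0 := sm (Set.mem_Ici.2 le_rfl) (Set.mem_Ici.2 (by linarith)) (by linarith)
        rw [max_eq_left (by linarith)] at h1
        exact (h1.trans_lt h2).ne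
    obtain ⟨c, hl, hcne⟩ := mono
    obtain ⟨hc, hfc, hE⟩ := limTop W H hr c hl
    have hE0 := hE y0
    rw [hy0] at hE0
    have hFp := W.Fpos (hr y0)
    rcases W.zeros hc hfc with rfl | rfl | rfl
    · rw [W.Fm1] at hE0; linarith
    · exact hcne (W.Fmax (hr y0) (by linarith)).symm
    · rw [W.F1] at hE0; linarith
  obtain ⟨z, hz0, hz⟩ := hz
  obtain ⟨b, hb0, hb, hbne⟩ : ∃ b, y0 < b ∧ v1 b = 0 ∧ ∀ x ∈ Set.Ioo y0 b, v1 x ≠ 0 := by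
    have hev : ∀ᶠ x in 𝓝[>] y0, v1 x ≠ 0 :=
      ((H.d2 y0).eventually_ne hf0).filter_mono (nhdsWithin_mono _ (fun x hx => (ne_of_gt hx)))
    obtain ⟨δ, hδ, hev⟩ := mem_nhdsGT_iff_exists_Ioo_subset.1 hev
    have hcl : IsCompact (Set.Icc δ z ∩ v1 ⁻¹' {0}) :=
      isCompact_Icc.inter_right (isClosed_singleton.preimage H.cont1)
    have hδz : δ ≤ z := by
      by_contra! h
      exact hev ⟨hz0, h⟩ hz
    obtain ⟨b, hb, hbl⟩ := hcl.exists_isLeast ⟨z, ⟨hδz, le_rfl⟩, hz⟩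
    refine ⟨b, lt_of_lt_of_le hδ hb.1.1, hb.2, fun x hx hx0 => ?_⟩
    rcases lt_or_ge x δ with h | h
    · exact hev ⟨hx.1, h⟩ hx0
    · have := hbl ⟨⟨h, hx.2.le.trans hb.1.2⟩, hx0⟩
      linarith [hx.2]
  have hqc : Continuous fun y => q (v y) :=
    W.qc.comp_continuous H.cont hr
  have main : ∀ σ : ℝ, σ ≠ 0 → (∀ x ∈ Set.Ioo y0 b, 0 < σ * v1 x) → False := by
    intro σ hσ hpos
    have d1 : ∀ x, HasDerivAt (fun x => σ * v1 x) (σ * f (v x)) x := fun x => (H.d2 x).const_mul σ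
    have d2 : ∀ x, HasDerivAt (fun x => σ * f (v x)) (q (v x) * (σ * v1 x)) x := fun x => by
      have := (((W.fd _ (hr x)).comp x (H.d1 x)).const_mul σ)
      exact this.congr_deriv (by ring)
    have e1 := right_nonneg (fun x => σ * v1 x) _ y0 b hb0 (d1 y0) (by simp [hy0]) hpos
    have e2 := right_nonneg (fun x => σ * v1 (-x)) _ (-b) (-y0) (by linarith)
      (refl_deriv (w := fun x => σ * v1 x) (d1 (- -b))) (by simp [hb])
      (fun x hx => hpos (-x) ⟨by linarith [hx.2], by linarith [hx.1]⟩)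
    rw [neg_neg] at e2
    have e3 : σ * f (v y0) ≠ 0 := mul_ne_zero hσ hf0
    have e4 := lt_of_le_of_ne e1 e3.symm
    refine unstable (fun y => q (v y)) (fun x => σ * v1 x) (fun x => σ * f (v x)) hqc d1 d2 y0 b hb0
      ?_ (by simp [hy0]) (by simp [hb]) (by linarith) hst
    intro x hx
    rcases eq_or_lt_of_le hx.1 with rfl | h1
    · simp [hy0]
    rcases eq_or_lt_of_le hx.2 with rfl | h2
    · simp [hb]
    exact (hpos x ⟨h1, h2⟩).le
  rcases sgn v1 H.cont1 _ Set.ordConnected_Ioo hbne with h | h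
  · exact main 1 one_ne_zero (fun x hx => by simpa using h x hx)
  · exact main (-1) (by norm_num) (fun x hx => by simpa using h x hx)

open Filter Topology in
lemma incr {F f q v v1 : ℝ → ℝ} (W : DWell F f q) (H : Sol f v v1)
    (hr : ∀ y, v y ∈ Set.Ioo (-1 : ℝ) 1) (hp : ∀ y, 0 < v1 y) :
    StrictMono v ∧ ∃ K, v K = 0 ∧ v1 K ^ 2 = 2 * F 0 := by
  have sm : StrictMono v := strictMono_of_deriv_pos fun x => by rw [(H.d1 x).deriv]; exact hp x
  refine ⟨sm, ?_⟩
  have t1 := tendsto_atTop_ciSup sm.monotone ⟨1, by rintro _ ⟨s, rfl⟩; exact (hr _).2.le⟩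
  have t2 := tendsto_atBot_ciInf sm.monotone ⟨-1, by rintro _ ⟨s, rfl⟩; exact (hr _).1.le⟩
  set cp := ⨆ s, v s
  set cm := ⨅ s, v s
  have l1 : v 0 ≤ cp := sm.monotone.ge_of_tendsto t1 0
  have l2 : cm ≤ v (-1) := sm.monotone.le_of_tendsto t2 (-1)
  have l3 : v (-1) < v 0 := sm (by norm_num)
  obtain ⟨a1, a2, a3⟩ := limTop W H hr cp t1
  obtain ⟨b1, b2, b3⟩ := limTop W H.refl (fun y => hr _) cm (t2.comp tendsto_neg_atTop_atBot)
  have a4 := a3 0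
  have b4 := b3 0
  simp only [neg_zero, neg_sq] at b4
  have hF0 : 0 < F 0 := W.Fpos ⟨by norm_num, by norm_num⟩
  have fin : cm < 0 → 0 < cp → F cp = 0 → ∃ K, v K = 0 ∧ v1 K ^ 2 = 2 * F 0 := by
    intro h1 h2 h3
    obtain ⟨x, hx⟩ := (t2.eventually (gt_mem_nhds h1)).exists
    obtain ⟨y, hy⟩ := (t1.eventually (lt_mem_nhds h2)).exists
    obtain ⟨K, -, hK⟩ := intermediate_value_uIcc (f := v) (a := x) (b := y) H.cont.continuousOn
      (Set.mem_uIcc.2 (Or.inl ⟨hx.le, hy.le⟩))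
    refine ⟨K, hK, ?_⟩
    have := a3 K
    rw [hK, h3] at this
    linarith
  have f1 := W.F1
  have f2 := W.Fm1
  rcases W.zeros a1 a2 with h | h | h <;> rcases W.zeros b1 b2 with h' | h' | h' <;>
    rw [h] at a4 l1 fin <;> rw [h'] at b4 l2 fin <;>
    first | (exfalso; linarith) | exact fin (by norm_num) (by norm_num) f1

lemma agree {F f q v v1 g g1 : ℝ → ℝ} (W : DWell F f q) (H : Sol f v v1) (G : Sol f g g1)
    (hr : ∀ y, v y ∈ Set.Ioo (-1 : ℝ) 1) (gr : ∀ y, g y ∈ Set.Ioo (-1 : ℝ) 1) (K : ℝ)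
    (h0 : v K = g 0) (h1 : v1 K = g1 0) (y : ℝ) : v y = g (y - K) := by
  obtain ⟨C, hC⟩ := W.lip
  have := uniq (fun y => v y - g (y - K)) (fun y => v1 y - g1 (y - K))
    (fun y => f (v y) - f (g (y - K)))
    (fun y => (H.d1 y).sub ((G.d1 (y - K)).comp_sub_const y K))
    (fun y => (H.d2 y).sub ((G.d2 (y - K)).comp_sub_const y K))
    (fun a b => ⟨C, fun y _ => hC _ (hr y) _ (gr _)⟩) K (by simp [h0]) (by simp [h1]) y
  linarith

open Real MeasureTheory

/-- A nonconstant bounded stable 1-D solution is a translate of `±g`; it is strictly monotone. -/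
theorem stmt_13
    (F g v : ℝ → ℝ)
    (hF : ContDiffOn ℝ 2 F (Set.Icc (-1) 1))
    (hF1 : F 1 = 0) (hFm1 : F (-1) = 0)
    (hF'1 : deriv F 1 = 0) (hF'm1 : deriv F (-1) = 0)
    (hF''1 : 0 < deriv (deriv F) 1) (hF''m1 : 0 < deriv (deriv F) (-1))
    (hFpos : ∀ t ∈ Set.Ioo (-1 : ℝ) 0, 0 < deriv F t)
    (hFneg : ∀ t ∈ Set.Ioo (0 : ℝ) 1, deriv F t < 0)
    (hg : ContDiff ℝ 2 g)
    (hgode : ∀ s : ℝ, deriv (deriv g) s = deriv F (g s))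
    (hgtop : Filter.Tendsto g Filter.atTop (nhds 1))
    (hgbot : Filter.Tendsto g Filter.atBot (nhds (-1)))
    (hg0 : g 0 = 0)
    (hv : ContDiff ℝ 2 v)
    (hvode : ∀ y : ℝ, deriv (deriv v) y = deriv F (v y))
    (hvb : ∀ y : ℝ, |v y| ≤ 1)
    (hstable : ∀ φ : ℝ → ℝ, ContDiff ℝ (⊤ : ℕ∞) φ → HasCompactSupport φ →
      0 ≤ ∫ y : ℝ, ((deriv φ y) ^ 2 + deriv (deriv F) (v y) * (φ y) ^ 2))
    (hnonconst : ¬ ∃ c : ℝ, ∀ y : ℝ, v y = c) :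
    (∃ K : ℝ, (∀ y : ℝ, v y = g (y - K)) ∨ (∀ y : ℝ, v y = g (K - y)))
      ∧ (StrictMono v ∨ StrictAnti v) := by
  have D1 : DifferentiableAt ℝ (deriv F) 1 := differentiableAt_of_deriv_ne_zero hF''1.ne'
  have Dm1 : DifferentiableAt ℝ (deriv F) (-1) := differentiableAt_of_deriv_ne_zero hF''m1.ne'
  have hFo : ContDiffOn ℝ 2 F (Set.Ioo (-1) 1) := hF.mono Set.Ioo_subset_Icc_self
  have hfo : ContDiffOn ℝ 1 (deriv F) (Set.Ioo (-1) 1) :=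
    hFo.deriv_of_isOpen isOpen_Ioo (by norm_num)
  have hqo : ContDiffOn ℝ 0 (deriv (deriv F)) (Set.Ioo (-1) 1) :=
    hfo.deriv_of_isOpen isOpen_Ioo (by norm_num)
  have hfd : ∀ t ∈ Set.Ioo (-1 : ℝ) 1, HasDerivAt (deriv F) (deriv (deriv F) t) t := fun t ht =>
    ((hfo.differentiableOn (by norm_num)).differentiableAt (isOpen_Ioo.mem_nhds ht)).hasDerivAt
  have W : DWell F (deriv F) (deriv (deriv F)) := by
    refine ⟨hF.continuousOn, ?_, hfd, ?_, hqo.continuousOn, ?_, hF1, hFm1, hFpos, hFneg⟩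
    · exact fun t ht =>
        ((hFo.differentiableOn (by norm_num)).differentiableAt (isOpen_Ioo.mem_nhds ht)).hasDerivAt
    · intro t ht
      rcases eq_or_lt_of_le ht.1 with rfl | h1
      · exact Dm1.continuousAt
      rcases eq_or_lt_of_le ht.2 with rfl | h2
      · exact D1.continuousAt
      exact (hfd t ⟨h1, h2⟩).continuousAt
    · have hw : ContDiffOn ℝ 1 (derivWithin F (Set.Icc (-1) 1)) (Set.Icc (-1) 1) :=
        hF.derivWithin (uniqueDiffOn_Icc (by norm_num)) (by norm_num)
      obtain ⟨K, hK⟩ := hw.exists_lipschitzOnWith (by norm_num) (convex_Icc _ _) isCompact_Icc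
      refine ⟨K, fun s hs t ht => ?_⟩
      have e : ∀ s ∈ Set.Ioo (-1 : ℝ) 1, derivWithin F (Set.Icc (-1) 1) s = deriv F s :=
        fun s hs => derivWithin_of_mem_nhds (Icc_mem_nhds hs.1 hs.2)
      have := hK.dist_le_mul s (Set.Ioo_subset_Icc_self hs) t (Set.Ioo_subset_Icc_self ht)
      rwa [e s hs, e t ht, Real.dist_eq, Real.dist_eq] at this
  have mk : ∀ h : ℝ → ℝ, ContDiff ℝ 2 h → (∀ s, deriv (deriv h) s = deriv F (h s)) →
      Sol (deriv F) h (deriv h) ∧ Continuous fun s => deriv F (h s) := by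
    intro h hh ho
    have h1 : ContDiff ℝ 1 (deriv h) := by
      have : ContDiff ℝ (1+1) h := by simpa [one_add_one_eq_two] using hh
      exact (contDiff_succ_iff_deriv.1 this).2.2
    refine ⟨⟨fun y => ((hh.differentiable (by norm_num)) y).hasDerivAt, fun y => ?_⟩, ?_⟩
    · rw [← ho]; exact ((h1.differentiable (by norm_num)) y).hasDerivAt
    · simp_rw [← ho]; exact h1.continuous_deriv le_rfl
  obtain ⟨V, Vc⟩ := mk v hv hvode
  obtain ⟨G, Gc⟩ := mk g hg hgode
  -- range of v
  have vr : ∀ y, v y ∈ Set.Ioo (-1 : ℝ) 1 := by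
    intro y
    have hb := fun y => abs_le.1 (hvb y)
    constructor
    · refine lt_of_le_of_ne (hb y).1 fun h => hnonconst ⟨-1, ?_⟩
      have hm : IsLocalMin v y := Filter.Eventually.of_forall fun x => by rw [← h]; exact (hb x).1
      exact touch _ v _ (-1) V.d1 V.d2 Vc Dm1 hF'm1 y h.symm (hm.hasDerivAt_eq_zero (V.d1 y))
    · refine lt_of_le_of_ne (hb y).2 fun h => hnonconst ⟨1, ?_⟩
      have hm : IsLocalMax v y := Filter.Eventually.of_forall fun x => by rw [h]; exact (hb x).2
      exact touch _ v _ 1 V.d1 V.d2 Vc D1 hF'1 y h (hm.hasDerivAt_eq_zero (V.d1 y))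
  -- range of g
  have g1 : ∀ y, g y ≠ 1 := fun y h => by
    have := noreturn _ g _ 1 G.d1 G.d2 Gc D1 hF'1 hgtop y h 0
    rw [hg0] at this; norm_num at this
  have gm1 : ∀ y, g y ≠ -1 := fun y h => by
    have := noreturn _ _ _ (-1) G.refl.d1 G.refl.d2 (Gc.comp continuous_neg) Dm1 hF'm1
      (hgbot.comp Filter.tendsto_neg_atTop_atBot) (-y) (by simpa using h) 0
    simp [hg0] at this
  have gr : ∀ y, g y ∈ Set.Ioo (-1 : ℝ) 1 := by
    intro y
    constructor
    · rcases sgn (fun y => g y + 1) (G.cont.add continuous_const) Set.univ Set.ordConnected_univ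
        (fun x _ h => gm1 x (by linarith)) with h | h
      · linarith [h y trivial]
      · have := h 0 trivial
        simp only [hg0] at this; norm_num at this
    · rcases sgn (fun y => 1 - g y) (continuous_const.sub G.cont) Set.univ Set.ordConnected_univ
        (fun x _ h => g1 x (by linarith)) with h | h
      · linarith [h y trivial]
      · have := h 0 trivial
        simp only [hg0] at this; norm_num at this
  have gE := (limTop W G gr 1 hgtop).2.2
  have gne : ∀ y, deriv g y ≠ 0 := fun y h => by
    have := gE y
    have h2 := W.Fpos (gr y)
    rw [h, hF1] at this
    linarith
  have gpos : 0 < deriv g 0 := by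
    rcases sgn _ G.cont1 Set.univ Set.ordConnected_univ (fun x _ => gne x) with h | h
    · exact h 0 trivial
    · have sa : StrictAnti g := strictAnti_of_deriv_neg fun x => h x trivial
      have := sa.antitone.le_of_tendsto hgtop 0
      rw [hg0] at this; norm_num at this
  have gE0 : deriv g 0 ^ 2 = 2 * F 0 := by
    have := gE 0
    rw [hF1, hg0] at this; linarith
  have fin : ∀ h h1 : ℝ → ℝ, Sol (deriv F) h h1 → (∀ y, h y ∈ Set.Ioo (-1 : ℝ) 1) →
      (∀ y, 0 < h1 y) → StrictMono h ∧ ∃ K, ∀ y, h y = g (y - K) := by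
    intro h h1 H hr hp
    obtain ⟨sm, K, hK, hK'⟩ := incr W H hr hp
    refine ⟨sm, K, agree W H G hr gr K (by rw [hK, hg0]) ?_⟩
    exact (pow_left_inj₀ (hp K).le gpos.le two_ne_zero).1 (by rw [hK', gE0])
  rcases sgn _ V.cont1 Set.univ Set.ordConnected_univ
    (fun x _ => nocrit W V vr hstable hnonconst x) with h | h
  · obtain ⟨sm, K, hK⟩ := fin v _ V vr (fun y => h y trivial)
    exact ⟨⟨K, Or.inl hK⟩, Or.inl sm⟩
  · obtain ⟨sm, K, hK⟩ := fin _ _ V.refl (fun y => vr _) (fun y => by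
      have := h (-y) trivial
      linarith)
    refine ⟨⟨-K, Or.inr fun y => ?_⟩, Or.inr fun x y hxy => ?_⟩
    · have := hK (-y)
      rw [neg_neg] at this
      rw [this]; congr 1; ring
    · have := sm (neg_lt_neg hxy)
      simpa using this
end

section
/- Any nonconstant bounded solution v of v'' = F'(v) on ℝ with −1 ≤ v ≤ 1 that tends to ±1 at ±∞ satisfies ∫_{-∞}^{∞} [(1/2)(v')² + F(v)] dy ≥ β = ∫_{-1}^{1} √(2F(s)) ds, with equality iff v is a translate of the heteroclinic g. -/
open Real MeasureTheory

lemma aux_uniq (h : ℝ → ℝ) (S : Set ℝ) (L : NNReal) (hL : LipschitzOnWith L h S)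
    (u w : ℝ → ℝ) (hu : ContDiff ℝ 2 u) (hw : ContDiff ℝ 2 w)
    (hu2 : ∀ y, u y ∈ S → deriv (deriv u) y = h (u y))
    (hw2 : ∀ y, w y ∈ S → deriv (deriv w) y = h (w y))
    (hS : ∀ y, u y = w y → ∀ᶠ t in nhds y, u t ∈ S ∧ w t ∈ S)
    (y0 : ℝ) (h0 : u y0 = w y0) (h1 : deriv u y0 = deriv w y0) : ∀ y, u y = w y := by
  have hu' : ContDiff ℝ 1 (deriv u) := ((contDiff_succ_iff_deriv (n := 1)).1 hu).2.2
  have hw' : ContDiff ℝ 1 (deriv w) := ((contDiff_succ_iff_deriv (n := 1)).1 hw).2.2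
  have du : Differentiable ℝ u := hu.differentiable (by norm_num)
  have dw : Differentiable ℝ w := hw.differentiable (by norm_num)
  have du' : Differentiable ℝ (deriv u) := hu'.differentiable (by norm_num)
  have dw' : Differentiable ℝ (deriv w) := hw'.differentiable (by norm_num)
  let A : Set ℝ := {y | (u y, deriv u y) = (w y, deriv w y)}
  have hAc : IsClosed A := isClosed_eq (du.continuous.prodMk du'.continuous)
    (dw.continuous.prodMk dw'.continuous)
  have hAo : IsOpen A := by
    rw [isOpen_iff_mem_nhds]
    intro y hy
    have hy' : (u y, deriv u y) = (w y, deriv w y) := hy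
    have key := ODE_solution_unique_of_eventually (v := fun _ (p : ℝ × ℝ) => (p.2, h p.1))
      (s := fun _ => S ×ˢ (Set.univ : Set ℝ)) (K := max 1 L) (t₀ := y)
      (f := fun t => (u t, deriv u t)) (g := fun t => (w t, deriv w t)) ?_ ?_ ?_ hy'
    · exact key
    · refine Filter.Eventually.of_forall fun _ => ?_
      apply LipschitzOnWith.of_dist_le_mul
      rintro ⟨a, b⟩ ⟨ha, -⟩ ⟨c, d⟩ ⟨hc, -⟩
      have := hL.dist_le_mul a ha c hc
      have h1 : dist a c ≤ max (dist a c) (dist b d) := le_max_left _ _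
      have h2 : dist b d ≤ max (dist a c) (dist b d) := le_max_right _ _
      have h3 : (L:ℝ) ≤ max 1 (L:ℝ) := le_max_right _ _
      have h4 : (1:ℝ) ≤ max 1 (L:ℝ) := le_max_left _ _
      simp only [Prod.dist_eq, NNReal.coe_max, NNReal.coe_one]
      apply max_le
      · nlinarith [dist_nonneg (x := b) (y := d)]
      · refine this.trans ?_
        gcongr
    · filter_upwards [hS y (Prod.ext_iff.1 hy').1] with t ht
      refine ⟨?_, ht.1, trivial⟩
      have := (du' t).hasDerivAt
      rw [hu2 t ht.1] at this
      exact (du t).hasDerivAt.prodMk this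
    · filter_upwards [hS y (Prod.ext_iff.1 hy').1] with t ht
      refine ⟨?_, ht.2, trivial⟩
      have := (dw' t).hasDerivAt
      rw [hw2 t ht.2] at this
      exact (dw t).hasDerivAt.prodMk this
  have hA : A = Set.univ := IsClopen.eq_univ ⟨hAc, hAo⟩ ⟨y0, Prod.ext h0 h1⟩
  intro y
  have : y ∈ A := hA ▸ trivial
  exact (Prod.ext_iff.1 this).1

lemma aux_bot (u : ℝ → ℝ) (du : Differentiable ℝ u) (a L : ℝ)
    (ha : Filter.Tendsto u Filter.atBot (nhds a))
    (hL : Filter.Tendsto (fun y => deriv u y ^ 2) Filter.atBot (nhds L)) : L = 0 := by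
  have hex : ∀ p : ℝ, ∃ x ∈ Set.Ioo (p-1) p, deriv u x = (u p - u (p-1)) / (p - (p-1)) :=
    fun p => exists_deriv_eq_slope u (by linarith) du.continuous.continuousOn
      du.differentiableOn
  choose x hx hx' using hex
  have hxb : Filter.Tendsto x Filter.atBot Filter.atBot :=
    Filter.tendsto_atBot_mono (fun p => (hx p).2.le) Filter.tendsto_id
  have h1 := hL.comp hxb
  have h2 : Filter.Tendsto (fun p => u p - u (p-1)) Filter.atBot (nhds (a - a)) :=
    ha.sub (ha.comp (Filter.tendsto_atBot_add_const_right _ (-1) Filter.tendsto_id))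
  have h3 := h2.pow 2
  have h4 : ((fun y => deriv u y ^ 2) ∘ x) = fun p => (u p - u (p-1))^2 := by
    funext p
    simp [hx' p]
  rw [h4] at h1
  have := tendsto_nhds_unique h1 h3
  simpa using this

lemma aux_top (u : ℝ → ℝ) (du : Differentiable ℝ u) (a L : ℝ)
    (ha : Filter.Tendsto u Filter.atTop (nhds a))
    (hL : Filter.Tendsto (fun y => deriv u y ^ 2) Filter.atTop (nhds L)) : L = 0 := by
  refine aux_bot (fun y => u (-y)) (by fun_prop) a L
    (ha.comp Filter.tendsto_neg_atBot_atTop) ?_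
  have := hL.comp Filter.tendsto_neg_atBot_atTop
  refine this.congr fun y => ?_
  simp [deriv_comp_neg]

lemma aux_cont (u f : ℝ → ℝ) (hu : Continuous u) (hfu : Continuous fun y => f (u y)) (p q : ℝ) :
    ContinuousOn f (u '' Set.uIcc p q) := by
  rw [continuousOn_iff_continuous_domRestrict]
  let φ : Set.uIcc p q → u '' Set.uIcc p q := fun t => ⟨u t, t, t.2, rfl⟩
  have hφ : Continuous φ := by
    apply Continuous.subtype_mk
    exact hu.comp continuous_subtype_val
  have hs : Function.Surjective φ := by
    rintro ⟨_, t, ht, rfl⟩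
    exact ⟨⟨t, ht⟩, rfl⟩
  have : CompactSpace (Set.uIcc p q) := isCompact_iff_compactSpace.1 isCompact_uIcc
  rw [(hφ.isClosedMap.isQuotientMap hφ hs).continuous_iff]
  exact hfu.comp continuous_subtype_val

lemma aux_int (u f : ℝ → ℝ) (hu : ContDiff ℝ 2 u)
    (hode : ∀ y, deriv (deriv u) y = f (u y)) (p q : ℝ) :
    (deriv u q) ^ 2 / 2 - (deriv u p) ^ 2 / 2 = ∫ s in (u p)..(u q), f s := by
  have hu' : ContDiff ℝ 1 (deriv u) := ((contDiff_succ_iff_deriv (n := 1)).1 hu).2.2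
  have hu'' : Continuous (deriv (deriv u)) := hu'.continuous_deriv (by norm_num)
  have du : Differentiable ℝ u := hu.differentiable (by norm_num)
  have du' : Differentiable ℝ (deriv u) := hu'.differentiable (by norm_num)
  have hc : Continuous fun y => f (u y) := by simpa only [← hode] using hu''
  rw [← intervalIntegral.integral_comp_mul_deriv'' (f := u) (f' := deriv u) (g := f)
    du.continuous.continuousOn (fun x _ => (du x).hasDerivAt.hasDerivWithinAt)
    du'.continuous.continuousOn (aux_cont u f du.continuous hc p q)]
  symm
  apply intervalIntegral.integral_eq_sub_of_hasDerivAt (f := fun y => deriv u y ^ 2 / 2)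
    (f' := fun x => (f ∘ u) x * deriv u x)
  · intro x _
    have := (((du' x).hasDerivAt.pow 2).div_const 2)
    rw [hode] at this
    refine HasDerivAt.congr_deriv this ?_
    simp only [Function.comp]
    push_cast
    ring
  · apply Continuous.intervalIntegrable
    exact hc.mul du'.continuous

lemma aux_energy (F u : ℝ → ℝ) (hF : ContDiffOn ℝ 2 F (Set.Icc (-1) 1)) (hFm1 : F (-1) = 0)
    (hu : ContDiff ℝ 2 u) (hode : ∀ y, deriv (deriv u) y = deriv F (u y))
    (hb : Filter.Tendsto u Filter.atBot (nhds (-1))) (q : ℝ) (hq : u q ∈ Set.Ioo (-1 : ℝ) 1) :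
    (deriv u q) ^ 2 / 2 = F (u q) := by
  have hu' : ContDiff ℝ 1 (deriv u) := ((contDiff_succ_iff_deriv (n := 1)).1 hu).2.2
  have hu'' : Continuous (deriv (deriv u)) := hu'.continuous_deriv (by norm_num)
  have du : Differentiable ℝ u := hu.differentiable (by norm_num)
  have hc : Continuous fun y => deriv F (u y) := by simpa only [← hode] using hu''
  have hFc : ContinuousOn F (Set.Icc (-1) 1) := hF.continuousOn
  have hFd : ∀ s ∈ Set.Ioo (-1 : ℝ) 1, HasDerivAt F (deriv F s) s := fun s hs =>
    ((hF.differentiableOn (by norm_num)).differentiableAt (Icc_mem_nhds hs.1 hs.2)).hasDerivAt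
  have ftc : ∀ p a, a ∈ Set.Icc (-1 : ℝ) 1 → Set.uIcc a (u q) ⊆ u '' Set.uIcc p q →
      ∫ s in a..(u q), deriv F s = F (u q) - F a := by
    intro p a ha hsub
    apply intervalIntegral.integral_eq_sub_of_hasDeriv_right
    · exact hFc.mono (Set.uIcc_subset_Icc ha (Set.Ioo_subset_Icc_self hq))
    · intro x hx
      refine (hFd x ⟨lt_of_le_of_lt ?_ hx.1, lt_of_lt_of_le hx.2 ?_⟩).hasDerivWithinAt
      · exact le_min ha.1 hq.1.le
      · exact max_le ha.2 hq.2.le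
    · exact ((aux_cont u (deriv F) du.continuous hc p q).mono hsub).intervalIntegrable
  have main : Filter.Tendsto (fun p => ∫ s in (u p)..(u q), deriv F s) Filter.atBot
      (nhds (F (u q))) := by
    by_cases hA : ∃ p1, u p1 < -1
    · obtain ⟨p1, hp1⟩ := hA
      have hsub : Set.uIcc (u p1) (u q) ⊆ u '' Set.uIcc p1 q :=
        intermediate_value_uIcc du.continuous.continuousOn
      have hcI := (aux_cont u (deriv F) du.continuous hc p1 q).mono hsub
      have hcp := intervalIntegral.continuousOn_primitive_interval_left (μ := volume)
        (hcI.integrableOn_compact isCompact_uIcc)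
      have hle : u p1 ≤ u q := by linarith [hq.1]
      have hat : ContinuousAt (fun x => ∫ t in x..(u q), deriv F t) (-1) :=
        hcp.continuousAt (by rw [Set.uIcc_of_le hle]; exact Icc_mem_nhds hp1 hq.1)
      have h2 := hat.tendsto.comp hb
      have h3 := ftc p1 (-1) (by norm_num) (by
        refine subset_trans ?_ hsub
        rw [Set.uIcc_of_le hle, Set.uIcc_of_le hq.1.le]
        exact Set.Icc_subset_Icc_left hp1.le)
      rw [h3, hFm1, sub_zero] at h2
      exact h2
    · push Not at hA
      have hbw : Filter.Tendsto u Filter.atBot (nhdsWithin (-1) (Set.Icc (-1) 1)) := by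
        refine tendsto_nhdsWithin_iff.2 ⟨hb, ?_⟩
        filter_upwards [hb.eventually (eventually_lt_nhds (show (-1:ℝ) < 1 by norm_num))] with p hp
        exact ⟨hA p, hp.le⟩
      have h1 : Filter.Tendsto (fun p => F (u q) - F (u p)) Filter.atBot
          (nhds (F (u q) - F (-1))) :=
        tendsto_const_nhds.sub ((hFc (-1) (by norm_num)).tendsto.comp hbw)
      rw [hFm1, sub_zero] at h1
      refine h1.congr' ?_
      filter_upwards [hb.eventually (eventually_lt_nhds (show (-1:ℝ) < 1 by norm_num))] with p hp
      exact (ftc p (u p) ⟨hA p, hp.le⟩ (intermediate_value_uIcc du.continuous.continuousOn)).symm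
  have h5 : Filter.Tendsto (fun p => deriv u p ^ 2) Filter.atBot
      (nhds (2 * ((deriv u q) ^ 2 / 2 - F (u q)))) := by
    refine ((tendsto_const_nhds.sub main).const_mul 2).congr fun p => ?_
    rw [← aux_int u (deriv F) hu hode p q]
    ring
  have := aux_bot u du _ _ hb h5
  linarith

/-- The energy of a heteroclinic-type 1-D solution is at least `β`, with equality
iff it is a translate of the heteroclinic `g`. -/
theorem stmt_14
    (F g v : ℝ → ℝ) (β : ℝ)
    (hF : ContDiffOn ℝ 2 F (Set.Icc (-1) 1))
    (hFnonneg : ∀ s ∈ Set.Icc (-1 : ℝ) 1, 0 ≤ F s)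
    (hF1 : F 1 = 0) (hFm1 : F (-1) = 0)
    (hβ : β = ∫ s in (-1 : ℝ)..1, Real.sqrt (2 * F s))
    (hg : ContDiff ℝ 2 g)
    (hgode : ∀ s : ℝ, deriv (deriv g) s = deriv F (g s))
    (hgtop : Filter.Tendsto g Filter.atTop (nhds 1))
    (hgbot : Filter.Tendsto g Filter.atBot (nhds (-1)))
    (hv : ContDiff ℝ 2 v)
    (hvode : ∀ y : ℝ, deriv (deriv v) y = deriv F (v y))
    (hvb : ∀ y : ℝ, -1 ≤ v y ∧ v y ≤ 1)
    (hvtop : Filter.Tendsto v Filter.atTop (nhds 1))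
    (hvbot : Filter.Tendsto v Filter.atBot (nhds (-1)))
    (hnonconst : ¬ ∃ c : ℝ, ∀ y : ℝ, v y = c) :
    β ≤ (∫ y : ℝ, ((1 / 2) * (deriv v y) ^ 2 + F (v y)))
      ∧ ((∫ y : ℝ, ((1 / 2) * (deriv v y) ^ 2 + F (v y))) = β
          ↔ ∃ K : ℝ, ∀ y : ℝ, v y = g (y - K)) := by
  have hv' : ContDiff ℝ 1 (deriv v) := ((contDiff_succ_iff_deriv (n := 1)).1 hv).2.2
  have hv'' : Continuous (deriv (deriv v)) := hv'.continuous_deriv (by norm_num)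
  have dv : Differentiable ℝ v := hv.differentiable (by norm_num)
  have dv' : Differentiable ℝ (deriv v) := hv'.differentiable (by norm_num)
  have hc : Continuous fun y => deriv F (v y) := by simpa only [← hvode] using hv''
  have hFc : ContinuousOn F (Set.Icc (-1) 1) := hF.continuousOn
  -- zeros
  have hzero : ∀ w : ℝ → ℝ, Continuous w → Filter.Tendsto w Filter.atTop (nhds 1) →
      Filter.Tendsto w Filter.atBot (nhds (-1)) → ∀ c ∈ Set.Ioo (-1 : ℝ) 1, ∃ y, w y = c := by
    intro w hw ht hb c hc
    obtain ⟨a, ha⟩ := (hb.eventually (eventually_lt_nhds hc.1)).exists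
    obtain ⟨b, hb⟩ := (ht.eventually (eventually_gt_nhds hc.2)).exists
    exact mem_range_of_exists_le_of_exists_ge hw ⟨a, ha.le⟩ ⟨b, hb.le⟩
  -- the energy identity for v
  have hE : ∀ y, (deriv v y) ^ 2 = 2 * F (v y) := by
    intro y
    rcases eq_or_lt_of_le (hvb y).1 with h | h
    · have : IsLocalMin v y := Filter.Eventually.of_forall fun t => by
        rw [← h]; exact (hvb t).1
      rw [this.deriv_eq_zero, ← h, hFm1]; norm_num
    rcases eq_or_lt_of_le (hvb y).2 with h' | h'
    · have : IsLocalMax v y := Filter.Eventually.of_forall fun t => by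
        rw [h']; exact (hvb t).2
      rw [this.deriv_eq_zero, h', hF1]; norm_num
    · have := aux_energy F v hF hFm1 hv hvode hvbot y ⟨h, h'⟩
      linarith
  -- the one-sided derivative
  let h : ℝ → ℝ := derivWithin F (Set.Icc (-1) 1)
  have hh1 : ContDiffOn ℝ 1 h (Set.Icc (-1) 1) :=
    hF.derivWithin (uniqueDiffOn_Icc (by norm_num)) (by norm_num)
  have hhc : ContinuousOn h (Set.Icc (-1) 1) := hh1.continuousOn
  obtain ⟨L, hL⟩ := hh1.exists_lipschitzOnWith (by norm_num) (convex_Icc _ _) isCompact_Icc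
  have hhI : ∀ s ∈ Set.Ioo (-1 : ℝ) 1, deriv F s = h s := fun s hs =>
    (derivWithin_of_mem_nhds (Icc_mem_nhds hs.1 hs.2)).symm
  obtain ⟨z0, hz0⟩ := hzero v dv.continuous hvtop hvbot 0 (by norm_num)
  have hagree : ∀ y, deriv F (v y) = h (v y) := by
    intro y
    by_cases hy : v y ∈ Set.Ioo (-1 : ℝ) 1
    · exact hhI _ hy
    have hsub : Set.uIcc (v z0) (v y) ⊆ v '' Set.uIcc z0 y :=
      intermediate_value_uIcc dv.continuous.continuousOn
    have hcI := (aux_cont v (deriv F) dv.continuous hc z0 y).mono hsub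
    rw [hz0] at hcI
    have hor : v y = -1 ∨ v y = 1 := by
      by_contra hcon
      push Not at hcon
      exact hy ⟨lt_of_le_of_ne (hvb y).1 hcon.1.symm, lt_of_le_of_ne (hvb y).2 hcon.2⟩
    rcases hor with h1 | h1
    · rw [h1] at hcI ⊢
      have e : Set.EqOn (deriv F) h (Set.Ioo (-1 : ℝ) 0) := fun s hs =>
        hhI s ⟨hs.1, hs.2.trans one_pos⟩
      rw [Set.uIcc_of_ge (by norm_num)] at hcI
      exact e.of_subset_closure hcI (hhc.mono (Set.Icc_subset_Icc_right (by norm_num)))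
        Set.Ioo_subset_Icc_self (by rw [closure_Ioo (by norm_num)]) (by norm_num)
    · rw [h1] at hcI ⊢
      have e : Set.EqOn (deriv F) h (Set.Ioo (0 : ℝ) 1) := fun s hs =>
        hhI s ⟨lt_trans (by norm_num) hs.1, hs.2⟩
      rw [Set.uIcc_of_le (by norm_num)] at hcI
      exact e.of_subset_closure hcI (hhc.mono (Set.Icc_subset_Icc_left (by norm_num)))
        Set.Ioo_subset_Icc_self (by rw [closure_Ioo (by norm_num)]) (by norm_num)
  have hvh : ∀ y, deriv (deriv v) y = h (v y) := fun y => (hvode y).trans (hagree y)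
  have hlim : ∀ (l : Filter ℝ) (e : ℝ), e ∈ Set.Icc (-1 : ℝ) 1 → F e = 0 →
      Filter.Tendsto v l (nhds e) → Filter.Tendsto (deriv v) l (nhds 0) ∧
      Filter.Tendsto (fun y => deriv (deriv v) y ^ 2) l (nhds (h e ^ 2)) := by
    intro l e he hFe hl
    have hw : Filter.Tendsto v l (nhdsWithin e (Set.Icc (-1) 1)) :=
      tendsto_nhdsWithin_iff.2 ⟨hl, Filter.Eventually.of_forall fun y => hvb y⟩
    constructor
    · have h1 : Filter.Tendsto (fun y => 2 * F (v y)) l (nhds (2 * F e)) :=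
        ((hFc e he).tendsto.comp hw).const_mul 2
      have h2 := h1.sqrt
      simp only [← hE, hFe, mul_zero, Real.sqrt_zero, Real.sqrt_sq_eq_abs] at h2
      exact (tendsto_zero_iff_abs_tendsto_zero _).2 h2
    · simp only [hvh]
      exact (((hhc e he).tendsto.comp hw).pow 2)
  have hhp : h 1 = 0 := by
    obtain ⟨a, b⟩ := hlim _ 1 (by norm_num) hF1 hvtop
    exact pow_eq_zero_iff (two_ne_zero) |>.1 (aux_top (deriv v) dv' 0 _ a b)
  have hhm : h (-1) = 0 := by
    obtain ⟨a, b⟩ := hlim _ (-1) (by norm_num) hFm1 hvbot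
    exact pow_eq_zero_iff (two_ne_zero) |>.1 (aux_bot (deriv v) dv' 0 _ a b)
  have hFpos : ∀ y, 0 < F (v y) := by
    intro y
    refine lt_of_le_of_ne (hFnonneg _ (hvb y)) fun h0 => hnonconst ⟨v y, ?_⟩
    have hha : h (v y) = 0 := by
      rcases eq_or_lt_of_le (hvb y).1 with h1 | h1
      · rw [← h1, hhm]
      rcases eq_or_lt_of_le (hvb y).2 with h2 | h2
      · rw [h2, hhp]
      rw [← hhI _ ⟨h1, h2⟩]
      apply IsLocalMin.deriv_eq_zero
      filter_upwards [Icc_mem_nhds h1 h2] with s hs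
      rw [← h0]; exact hFnonneg s hs
    have hd : deriv v y = 0 := by
      have := hE y
      rw [← h0, mul_zero] at this
      exact pow_eq_zero_iff (two_ne_zero) |>.1 this
    apply aux_uniq h (Set.Icc (-1) 1) L hL v (fun _ => v y) hv contDiff_const
      (fun t _ => hvh t) (fun t _ => by simp [hha])
      (fun t _ => Filter.Eventually.of_forall fun s => ⟨hvb s, hvb y⟩) y rfl
    simp [hd]
  have hvI : ∀ y, v y ∈ Set.Ioo (-1 : ℝ) 1 := by
    intro y
    have := hFpos y
    refine ⟨lt_of_le_of_ne (hvb y).1 fun h => ?_, lt_of_le_of_ne (hvb y).2 fun h => ?_⟩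
    · rw [← h, hFm1] at this; exact this.false
    · rw [h, hF1] at this; exact this.false
  have hne : ∀ y, deriv v y ≠ 0 := fun y h0 => by
    have := hE y
    rw [h0] at this
    linarith [hFpos y]
  have hpos : ∀ y, 0 < deriv v y := by
    by_contra hcon
    push Not at hcon
    obtain ⟨a, ha⟩ := hcon
    have hneg : ∀ y, deriv v y < 0 := by
      intro y
      by_contra hy
      push Not at hy
      obtain ⟨x, hx⟩ := mem_range_of_exists_le_of_exists_ge dv'.continuous ⟨a, ha⟩ ⟨y, hy⟩
      exact hne x hx
    have hanti := strictAnti_of_deriv_neg hneg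
    have h1 : 1 ≤ v 0 := le_of_tendsto hvtop
      (by filter_upwards [Filter.eventually_ge_atTop 0] with t ht using hanti.antitone ht)
    linarith [(hvI 0).2]
  have hmono := strictMono_of_deriv_pos hpos
  have himg : v '' Set.univ = Set.Ioo (-1 : ℝ) 1 := by
    ext s
    constructor
    · rintro ⟨y, -, rfl⟩; exact hvI y
    · intro hs
      obtain ⟨y, hy⟩ := hzero v dv.continuous hvtop hvbot s hs
      exact ⟨y, trivial, hy⟩
  have hint : (∫ y : ℝ, ((1 / 2) * (deriv v y) ^ 2 + F (v y))) = β := by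
    have h1 := integral_image_eq_integral_abs_deriv_smul MeasurableSet.univ
      (fun x _ => (dv x).hasDerivAt.hasDerivWithinAt) hmono.injective.injOn
      (fun s => Real.sqrt (2 * F s))
    rw [himg, ← integral_Ioc_eq_integral_Ioo, ← intervalIntegral.integral_of_le (by norm_num),
      ← hβ, setIntegral_univ] at h1
    rw [h1]
    congr 1
    funext y
    rw [← hE y, Real.sqrt_sq (hpos y).le, abs_of_pos (hpos y), smul_eq_mul]
    linarith [hE y]
  refine ⟨hint.ge, fun _ => ?_, fun _ => hint⟩
  -- uniqueness
  have dg : Differentiable ℝ g := hg.differentiable (by norm_num)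
  obtain ⟨y0, hy0⟩ := hzero g dg.continuous hgtop hgbot 0 (by norm_num)
  have hgE := aux_energy F g hF hFm1 hg hgode hgbot y0 (by rw [hy0]; norm_num)
  have hsq : deriv g y0 ^ 2 = deriv v z0 ^ 2 := by
    rw [hE z0, hz0]; rw [hy0] at hgE; linarith
  have hL' : LipschitzOnWith L h (Set.Ioo (-1) 1) := hL.mono Set.Ioo_subset_Icc_self
  have hev : ∀ w : ℝ → ℝ, Continuous w → (∀ y, w y ∈ Set.Ioo (-1 : ℝ) 1) → 
      ∀ y, w y = g y → ∀ᶠ t in nhds y, w t ∈ Set.Ioo (-1 : ℝ) 1 ∧ g t ∈ Set.Ioo (-1 : ℝ) 1 := by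
    intro w _ hwI y hy
    have : g y ∈ Set.Ioo (-1 : ℝ) 1 := hy ▸ hwI y
    filter_upwards [dg.continuous.continuousAt.eventually_mem (isOpen_Ioo.mem_nhds this)] with t ht
    exact ⟨hwI t, ht⟩
  rcases sq_eq_sq_iff_eq_or_eq_neg.1 hsq with hd | hd
  · refine ⟨z0 - y0, fun y => ?_⟩
    have hw1 : ∀ t, deriv (fun y => v (y + (z0 - y0))) t = deriv v (t + (z0 - y0)) :=
      fun t => deriv_comp_add_const _ _ _
    have hw2 : ∀ t, deriv (deriv (fun y => v (y + (z0 - y0)))) t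
        = deriv (deriv v) (t + (z0 - y0)) := fun t => by
      rw [funext hw1]; exact deriv_comp_add_const _ _ _
    have := aux_uniq h (Set.Ioo (-1) 1) L hL' (fun y => v (y + (z0 - y0))) g
      (hv.comp (contDiff_id.add contDiff_const)) hg (fun t _ => by rw [hw2, hvh])
      (fun t ht => by rw [hgode, hhI _ ht])
      (hev _ (dv.continuous.comp (continuous_id.add continuous_const)) fun _ => hvI _) y0
      (by simp [hz0, hy0]) (by rw [hw1, hd]; congr 1; ring) (y - (z0 - y0))
    simpa using this
  · exfalso
    have hw1 : ∀ t, deriv (fun y => v ((z0 + y0) - y)) t = - deriv v ((z0 + y0) - t) :=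
      fun t => deriv_comp_const_sub _ _ _
    have hw2 : ∀ t, deriv (deriv (fun y => v ((z0 + y0) - y))) t
        = deriv (deriv v) ((z0 + y0) - t) := fun t => by
      rw [funext hw1, deriv.fun_neg, deriv_comp_const_sub, neg_neg]
    have := aux_uniq h (Set.Ioo (-1) 1) L hL' (fun y => v ((z0 + y0) - y)) g
      (hv.comp (contDiff_const.sub contDiff_id)) hg (fun t _ => by rw [hw2, hvh])
      (fun t ht => by rw [hgode, hhI _ ht])
      (hev _ (dv.continuous.comp (continuous_const.sub continuous_id)) fun _ => hvI _) y0
      (by simp [hz0, hy0]) (by rw [hw1, hd]; congr 2; ring)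
    have hanti : Antitone g := by
      intro a b hab
      rw [← this a, ← this b]
      exact hmono.monotone (by linarith)
    have h1 : 1 ≤ g y0 := le_of_tendsto hgtop
      (by filter_upwards [Filter.eventually_ge_atTop y0] with t ht using hanti ht)
    rw [hy0] at h1
    norm_num at h1
end
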